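/- arXiv:2512.10704 — 2 statements merged into one kernel-verified Lean document; each statement's English description precedes it below -/
import Mathlib

section
/- Let λ_k = 4π²|k|² + 1 for k ∈ ℤ². Then as λ → 0⁺, the sum N₀(λ) = Σ_{k ∈ ℤ²} 1/(e^{λ λ_k} - 1) satisfies N₀(λ) = -(1/(4π)) λ^{-1} log λ + O(λ^{-1}). -/
open Real Filter Asymptotics

theorem summable_exp_neg_pi_mul_int_sq {a : ℝ} (ha : 0 < a) :
    Summable fun n : ℤ => exp (-π * a * (n : ℝ) ^ 2) := by
  have h := (HurwitzZeta.hasSum_int_evenKernel 0 ha).summable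
  refine h.congr fun n => ?_
  congr 1
  ring

/-- The theta series `∑ exp (-π a n²)` tends to `1` at rate at least `1 / a`. -/
theorem mul_tsum_exp_neg_pi_mul_int_sq_sub_one_le {b : ℝ} (hb : 1 ≤ b) :
    b * ((∑' n : ℤ, exp (-π * b * (n : ℝ) ^ 2)) - 1)
      ≤ exp 1 * ∑' n : ℤ, exp (-π * 1 * (n : ℝ) ^ 2) := by
  have hs := summable_exp_neg_pi_mul_int_sq (show 0 < b by linarith)
  have h1 := summable_exp_neg_pi_mul_int_sq one_pos
  have hd := (hs.hasSum.sub (hasSum_ite_eq (0 : ℤ) (1 : ℝ))).mul_left b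
  rw [← hd.tsum_eq, ← tsum_mul_left]
  refine hd.summable.tsum_le_tsum (fun n => ?_) (h1.mul_left _)
  rcases eq_or_ne n 0 with rfl | hn
  · simp [exp_nonneg]
  · have hn1 : (1 : ℝ) ≤ (n : ℝ) ^ 2 := by
      exact_mod_cast Int.add_one_le_iff.2 (sq_pos_of_ne_zero hn)
    rw [if_neg hn, sub_zero]
    calc b * exp (-π * b * (n : ℝ) ^ 2)
        ≤ exp b * exp (-π * b * (n : ℝ) ^ 2) := by
          gcongr
          linarith [add_one_le_exp b]
      _ ≤ exp 1 * exp (-π * 1 * (n : ℝ) ^ 2) := by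
          rw [← exp_add, ← exp_add, exp_le_exp]
          have hpi : 1 ≤ π * (n : ℝ) ^ 2 := by nlinarith [pi_gt_three]
          nlinarith [mul_nonneg (sub_nonneg.2 hb) (sub_nonneg.2 hpi)]

theorem one_le_tsum_exp_neg_pi_mul_int_sq {a : ℝ} (ha : 0 < a) :
    1 ≤ ∑' n : ℤ, exp (-π * a * (n : ℝ) ^ 2) := by
  have h := (summable_exp_neg_pi_mul_int_sq ha).le_tsum 0 fun _ _ => exp_nonneg _
  simpa using h

theorem tsum_exp_neg_pi_mul_int_sq_antitone {a b : ℝ} (ha : 0 < a) (hab : a ≤ b) :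
    ∑' n : ℤ, exp (-π * b * (n : ℝ) ^ 2) ≤ ∑' n : ℤ, exp (-π * a * (n : ℝ) ^ 2) := by
  refine (summable_exp_neg_pi_mul_int_sq (ha.trans_le hab)).tsum_le_tsum (fun n => ?_)
    (summable_exp_neg_pi_mul_int_sq ha)
  rw [exp_le_exp]
  have := mul_le_mul_of_nonneg_right hab (mul_nonneg pi_pos.le (sq_nonneg (n : ℝ)))
  linarith

/-- The square of the theta series differs from `1 / a` by a bounded amount. -/
theorem exists_abs_tsum_exp_neg_pi_mul_int_sq_sq_sub_inv_le :
    ∃ C : ℝ, ∀ a : ℝ, 0 < a → |(∑' n : ℤ, exp (-π * a * (n : ℝ) ^ 2)) ^ 2 - a⁻¹| ≤ C := by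
  set T := ∑' n : ℤ, exp (-π * 1 * (n : ℝ) ^ 2) with hT
  have hT1 : 1 ≤ T := one_le_tsum_exp_neg_pi_mul_int_sq one_pos
  have he : (1 : ℝ) ≤ exp 1 := one_le_exp zero_le_one
  refine ⟨exp 1 * T * (T + 1), fun a ha => ?_⟩
  rcases le_total 1 a with h1 | h1
  · have hl := one_le_tsum_exp_neg_pi_mul_int_sq ha
    have hu := tsum_exp_neg_pi_mul_int_sq_antitone one_pos h1
    rw [← hT] at hu
    have hi : 0 < a⁻¹ := inv_pos.2 ha
    have hi1 : a⁻¹ ≤ 1 := inv_le_one_of_one_le₀ h1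
    have hTT : T * (T + 1) ≤ exp 1 * T * (T + 1) := by
      nlinarith [mul_nonneg (sub_nonneg.2 he) (show 0 ≤ T * (T + 1) by positivity)]
    rw [abs_le]
    constructor <;> nlinarith
  · have hb : 1 ≤ a⁻¹ := (one_le_inv₀ ha).2 h1
    have hl := one_le_tsum_exp_neg_pi_mul_int_sq (inv_pos.2 ha)
    have hu := tsum_exp_neg_pi_mul_int_sq_antitone one_pos hb
    have hm := mul_tsum_exp_neg_pi_mul_int_sq_sub_one_le hb
    have hP : ∑' n : ℤ, exp (-π * a * (n : ℝ) ^ 2)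
        = 1 / a ^ (1 / 2 : ℝ) * ∑' n : ℤ, exp (-π * a⁻¹ * (n : ℝ) ^ 2) := by
      simpa only [div_eq_mul_inv] using Real.tsum_exp_neg_mul_int_sq ha
    rw [← hT] at hu hm
    rw [hP]
    set S := ∑' n : ℤ, exp (-π * a⁻¹ * (n : ℝ) ^ 2)
    have hsq : (1 / a ^ (1 / 2 : ℝ)) ^ 2 = a⁻¹ := by
      rw [← sqrt_eq_rpow, div_pow, sq_sqrt ha.le, one_pow, one_div]
    have hfac : (1 / a ^ (1 / 2 : ℝ) * S) ^ 2 - a⁻¹ = a⁻¹ * (S - 1) * (S + 1) := by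
      rw [mul_pow, hsq]
      ring
    have h0 : 0 ≤ a⁻¹ * (S - 1) := mul_nonneg (by linarith) (by linarith)
    rw [hfac, abs_of_nonneg (mul_nonneg h0 (by linarith))]
    exact mul_le_mul hm (by linarith) (by linarith) (by positivity)

theorem hasSum_exp_neg_nat_succ_mul {x : ℝ} (hx : 0 < x) :
    HasSum (fun n : ℕ => exp (-((n + 1 : ℝ) * x))) (1 / (exp x - 1)) := by
  have h := (hasSum_geometric_of_lt_one (exp_nonneg (-x))
    (exp_lt_one_iff.2 (neg_lt_zero.2 hx))).mul_left (exp (-x))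
  have hne : exp x - 1 ≠ 0 := (sub_pos.2 (one_lt_exp_iff.2 hx)).ne'
  have hval : 1 / (exp x - 1) = exp (-x) * (1 - exp (-x))⁻¹ := by
    have hne' : 1 - exp (-x) ≠ 0 := (sub_pos.2 (exp_lt_one_iff.2 (neg_lt_zero.2 hx))).ne'
    rw [← div_eq_mul_inv, div_eq_div_iff hne hne', mul_sub (exp (-x)), ← exp_add]
    simp
  rw [hval]
  refine h.congr_fun fun n => ?_
  rw [← exp_nat_mul, ← exp_add]
  congr 1
  ring

theorem hasSum_exp_neg_nat_succ_mul_div {x : ℝ} (hx : 0 < x) :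
    HasSum (fun n : ℕ => exp (-((n + 1 : ℝ) * x)) / (n + 1)) (-log (1 - exp (-x))) := by
  have h := Real.hasSum_pow_div_log_of_abs_lt_one (x := exp (-x))
    (by rw [abs_of_pos (exp_pos _)]; exact exp_lt_one_iff.2 (neg_lt_zero.2 hx))
  convert h using 3 with n
  rw [← exp_nat_mul]
  congr 1
  push_cast
  ring

theorem abs_log_sub_log_one_sub_exp_neg_le {x : ℝ} (hx : 0 < x) :
    |log x - log (1 - exp (-x))| ≤ x := by
  have h1 : 0 < 1 - exp (-x) := sub_pos.2 (exp_lt_one_iff.2 (neg_lt_zero.2 hx))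
  have h2 : 1 - exp (-x) ≤ x := by linarith [add_one_le_exp (-x)]
  have h3 : x ≤ exp x * (1 - exp (-x)) := by
    rw [mul_sub, ← exp_add]
    simp only [add_neg_cancel, exp_zero, mul_one]
    linarith [add_one_le_exp x]
  have h4 := log_le_log h1 h2
  have h5 := log_le_log hx h3
  rw [log_mul (exp_pos x).ne' h1.ne', log_exp] at h5
  rw [abs_of_nonneg (by linarith)]
  linarith

theorem hasSum_exp_neg_pi_mul_int_sq_prod {a : ℝ} (ha : 0 < a) :
    HasSum (fun k : ℤ × ℤ => exp (-π * a * (k.1 : ℝ) ^ 2) * exp (-π * a * (k.2 : ℝ) ^ 2))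
      ((∑' n : ℤ, exp (-π * a * (n : ℝ) ^ 2)) ^ 2) := by
  have hs := summable_exp_neg_pi_mul_int_sq ha
  rw [sq]
  exact hs.hasSum.mul hs.hasSum
    (hs.mul_of_nonneg hs (fun _ => exp_nonneg _) fun _ => exp_nonneg _)

/-- The particle number as a series over the powers of the fugacity. -/
theorem hasSum_particle_number {lam : ℝ} (hlam : 0 < lam) :
    HasSum (fun n : ℕ => exp (-((n + 1 : ℝ) * lam)) *
        (∑' j : ℤ, exp (-π * (4 * π * ((n + 1 : ℝ) * lam)) * (j : ℝ) ^ 2)) ^ 2)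
      (∑' k : ℤ × ℤ,
        1 / (exp (lam * (4 * π ^ 2 * ((k.1 : ℝ) ^ 2 + (k.2 : ℝ) ^ 2) + 1)) - 1)) := by
  obtain ⟨C, hC⟩ := exists_abs_tsum_exp_neg_pi_mul_int_sq_sq_sub_inv_le
  set F : ℕ × (ℤ × ℤ) → ℝ := fun p =>
    exp (-((p.1 + 1 : ℝ) *
      (lam * (4 * π ^ 2 * ((p.2.1 : ℝ) ^ 2 + (p.2.2 : ℝ) ^ 2) + 1)))) with hF
  have hn : ∀ n : ℕ, 0 < 4 * π * ((n + 1 : ℝ) * lam) := fun n => by positivity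
  have hrow : ∀ n : ℕ, HasSum (fun k => F (n, k)) (exp (-((n + 1 : ℝ) * lam)) *
      (∑' j : ℤ, exp (-π * (4 * π * ((n + 1 : ℝ) * lam)) * (j : ℝ) ^ 2)) ^ 2) := fun n => by
    refine ((hasSum_exp_neg_pi_mul_int_sq_prod (hn n)).mul_left _).congr_fun fun k => ?_
    simp only [hF, ← exp_add]
    congr 1
    ring
  have hcol : ∀ k : ℤ × ℤ, HasSum (fun n => F (n, k))
      (1 / (exp (lam * (4 * π ^ 2 * ((k.1 : ℝ) ^ 2 + (k.2 : ℝ) ^ 2) + 1)) - 1)) := fun k =>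
    hasSum_exp_neg_nat_succ_mul (by positivity)
  have hsum : Summable fun n : ℕ => exp (-((n + 1 : ℝ) * lam)) *
      (∑' j : ℤ, exp (-π * (4 * π * ((n + 1 : ℝ) * lam)) * (j : ℝ) ^ 2)) ^ 2 := by
    refine Summable.of_nonneg_of_le (fun n => by positivity) (fun n => ?_)
      ((hasSum_exp_neg_nat_succ_mul hlam).summable.mul_right (C + (4 * π * lam)⁻¹))
    refine mul_le_mul_of_nonneg_left ?_ (exp_nonneg _)
    have h1 := (abs_le.1 (hC _ (hn n))).2
    have h2 : (4 * π * ((n + 1 : ℝ) * lam))⁻¹ ≤ (4 * π * lam)⁻¹ := by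
      refine inv_anti₀ (by positivity) ?_
      refine mul_le_mul_of_nonneg_left ?_ (by positivity)
      nlinarith [(Nat.cast_nonneg n : (0 : ℝ) ≤ n)]
    linarith
  have hFs : Summable F := by
    rw [summable_prod_of_nonneg fun p => exp_nonneg _]
    exact ⟨fun n => (hrow n).summable, hsum.congr fun n => (hrow n).tsum_eq.symm⟩
  have hswap := hFs.hasSum.prod_fiberwise hrow
  have hFs' := (Equiv.prodComm (ℤ × ℤ) ℕ).hasSum_iff.2 hFs.hasSum
  rw [(hFs'.prod_fiberwise hcol).tsum_eq]
  exact hswap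

/-- As `λ → 0⁺`, `N₀(λ) = Σ_{k ∈ ℤ²} 1/(e^{λ(4π²|k|²+1)} - 1)` satisfies
`N₀(λ) = -(1/(4π)) λ⁻¹ log λ + O(λ⁻¹)`. -/
theorem free_particle_number_asymptotics :
    (fun lam : ℝ =>
        (∑' k : ℤ × ℤ,
          1 / (Real.exp (lam * (4 * π ^ 2 * ((k.1 : ℝ) ^ 2 + (k.2 : ℝ) ^ 2) + 1)) - 1))
        - (-(1 / (4 * π)) * lam⁻¹ * Real.log lam))
      =O[nhdsWithin 0 (Set.Ioi 0)] fun lam : ℝ => lam⁻¹ := by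
  obtain ⟨C, hC⟩ := exists_abs_tsum_exp_neg_pi_mul_int_sq_sq_sub_inv_le
  have hC0 : 0 ≤ C := (abs_nonneg _).trans (hC 1 one_pos)
  refine IsBigO.of_bound (C + 1 / (4 * π)) ?_
  filter_upwards [Ioo_mem_nhdsGT (zero_lt_one' ℝ)] with lam hlam
  obtain ⟨h0, h1⟩ := hlam
  have hN := hasSum_particle_number h0
  have hL := (hasSum_exp_neg_nat_succ_mul_div h0).mul_left (1 / (4 * π) * lam⁻¹)
  have hE := (hasSum_exp_neg_nat_succ_mul h0).mul_left C
  have hdiff := hN.sub hL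
  set N := ∑' k : ℤ × ℤ,
    1 / (exp (lam * (4 * π ^ 2 * ((k.1 : ℝ) ^ 2 + (k.2 : ℝ) ^ 2) + 1)) - 1)
  have hbound : |N - 1 / (4 * π) * lam⁻¹ * -log (1 - exp (-lam))|
      ≤ C * (1 / (exp lam - 1)) := by
    rw [← hdiff.tsum_eq, ← Real.norm_eq_abs]
    refine tsum_of_norm_bounded hE fun n => ?_
    have hfac : ∀ X : ℝ, exp (-((n + 1 : ℝ) * lam)) * X
        - 1 / (4 * π) * lam⁻¹ * (exp (-((n + 1 : ℝ) * lam)) / (n + 1))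
        = exp (-((n + 1 : ℝ) * lam)) * (X - (4 * π * ((n + 1 : ℝ) * lam))⁻¹) := fun X => by
      field_simp
    rw [hfac, Real.norm_eq_abs, abs_mul, abs_of_pos (exp_pos _), mul_comm C]
    exact mul_le_mul_of_nonneg_left (hC _ (by positivity)) (exp_nonneg _)
  have hgeom : C * (1 / (exp lam - 1)) ≤ C * lam⁻¹ := by
    refine mul_le_mul_of_nonneg_left ?_ hC0
    rw [one_div]
    exact inv_anti₀ h0 (by linarith [add_one_le_exp lam])
  have hlog : |1 / (4 * π) * lam⁻¹ * (log lam - log (1 - exp (-lam)))|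
      ≤ 1 / (4 * π) * lam⁻¹ := by
    rw [abs_mul, abs_of_pos (show 0 < 1 / (4 * π) * lam⁻¹ by positivity)]
    exact mul_le_of_le_one_right (by positivity)
      ((abs_log_sub_log_one_sub_exp_neg_le h0).trans h1.le)
  rw [Real.norm_eq_abs, Real.norm_eq_abs, abs_of_pos (inv_pos.2 h0)]
  calc |N - -(1 / (4 * π)) * lam⁻¹ * log lam|
      = |(N - 1 / (4 * π) * lam⁻¹ * -log (1 - exp (-lam)))
          + 1 / (4 * π) * lam⁻¹ * (log lam - log (1 - exp (-lam)))| := by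
        congr 1
        ring
    _ ≤ (C + 1 / (4 * π)) * lam⁻¹ := by
        refine (abs_add_le _ _).trans ?_
        linarith
end

section
/- Second Berezin–Lieb inequality: let 𝔎 be a K-dimensional Hilbert space and Γ a state on the Fock space 𝔉(𝔎) admitting a nonnegative upper symbol ν, i.e. Γ = ∫_𝔎 ν(u)|ξ(u)⟩⟨ξ(u)| du with ν ≥ 0 and ∫ν = 1. Then for every convex function f : ℝ⁺ → ℝ, Tr[f(Γ)] ≤ π^{-K} ∫_𝔎 f(π^K ν(u)) du. -/
open scoped InnerProductSpace

theorem Complex.inner_self_eq_ofReal_norm_sq {F : Type*} [NormedAddCommGroup F]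
    [InnerProductSpace ℂ F] (x : F) : ⟪x, x⟫_ℂ = ((‖x‖ ^ 2 : ℝ) : ℂ) := by
  rw [inner_self_eq_norm_sq_to_K]
  simp

open MeasureTheory Filter Topology in
/-- A weakly measurable family `ξ` that resolves `c` times the identity on a total set does so
on the whole space. -/
theorem integral_norm_inner_sq_of_total {α F : Type*} [MeasurableSpace α] {m : Measure α}
    [NormedAddCommGroup F] [InnerProductSpace ℂ F] {ξ : α → F} {s : Set F} {c : ℝ} (hc : 0 ≤ c)
    (hs : (Submodule.span ℂ s).topologicalClosure = ⊤)
    (hmeas : ∀ x, AEStronglyMeasurable (fun u => ⟪ξ u, x⟫_ℂ) m)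
    (hint : ∀ x ∈ s, ∀ y ∈ s, Integrable (fun u => ⟪x, ξ u⟫_ℂ * ⟪ξ u, y⟫_ℂ) m)
    (heq : ∀ x ∈ s, ∀ y ∈ s, ∫ u, ⟪x, ξ u⟫_ℂ * ⟪ξ u, y⟫_ℂ ∂m = c * ⟪x, y⟫_ℂ) (x : F) :
    Integrable (fun u => ‖⟪ξ u, x⟫_ℂ‖ ^ 2) m ∧ ∫ u, ‖⟪ξ u, x⟫_ℂ‖ ^ 2 ∂m = c * ‖x‖ ^ 2 := by
  have hspan : ∀ x ∈ Submodule.span ℂ s, ∀ y ∈ Submodule.span ℂ s,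
      Integrable (fun u => ⟪x, ξ u⟫_ℂ * ⟪ξ u, y⟫_ℂ) m ∧
        ∫ u, ⟪x, ξ u⟫_ℂ * ⟪ξ u, y⟫_ℂ ∂m = c * ⟪x, y⟫_ℂ := by
    intro x hx y hy
    induction hx, hy using Submodule.span_induction₂ with
    | mem_mem x y hx hy => exact ⟨hint x hx y hy, heq x hx y hy⟩
    | zero_left y hy => simp
    | zero_right x hx => simp
    | add_left x y z hx hy hz h₁ h₂ =>
      simp only [inner_add_left, add_mul]
      exact ⟨h₁.1.add h₂.1, by rw [integral_add h₁.1 h₂.1, h₁.2, h₂.2, mul_add]⟩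
    | add_right x y z hx hy hz h₁ h₂ =>
      simp only [inner_add_right, mul_add]
      exact ⟨h₁.1.add h₂.1, by rw [integral_add h₁.1 h₂.1, h₁.2, h₂.2]⟩
    | smul_left r x y hx hy h =>
      simp only [inner_smul_left, mul_assoc]
      exact ⟨h.1.const_mul _, by rw [integral_const_mul, h.2]; ring⟩
    | smul_right r x y hx hy h =>
      simp only [inner_smul_right, mul_left_comm _ r]
      exact ⟨h.1.const_mul _, by rw [integral_const_mul, h.2]⟩
  have hsq : ∀ x u, ⟪x, ξ u⟫_ℂ * ⟪ξ u, x⟫_ℂ = ((‖⟪ξ u, x⟫_ℂ‖ ^ 2 : ℝ) : ℂ) := by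
    intro x u
    rw [← inner_conj_symm x (ξ u), Complex.conj_mul', Complex.ofReal_pow]
  have hreal : ∀ x ∈ Submodule.span ℂ s, Integrable (fun u => ‖⟪ξ u, x⟫_ℂ‖ ^ 2) m ∧
      ∫ u, ‖⟪ξ u, x⟫_ℂ‖ ^ 2 ∂m = c * ‖x‖ ^ 2 := by
    intro x hx
    obtain ⟨h₁, h₂⟩ := hspan x hx x hx
    simp only [hsq] at h₁ h₂
    refine ⟨h₁.re, ?_⟩
    rw [integral_complex_ofReal, Complex.inner_self_eq_ofReal_norm_sq] at h₂
    exact_mod_cast h₂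
  have hnorm : ∀ x, MemLp (fun u => ⟪ξ u, x⟫_ℂ) 2 m →
      eLpNorm (fun u => ⟪ξ u, x⟫_ℂ) 2 m =
        ENNReal.ofReal (Real.sqrt (∫ u, ‖⟪ξ u, x⟫_ℂ‖ ^ 2 ∂m)) := by
    intro x hx
    rw [hx.eLpNorm_eq_integral_rpow_norm (by simp) (by simp)]
    simp [Real.sqrt_eq_rpow]
  have hspanNorm : ∀ x ∈ Submodule.span ℂ s,
      eLpNorm (fun u => ⟪ξ u, x⟫_ℂ) 2 m = ENNReal.ofReal (Real.sqrt c * ‖x‖) := by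
    intro x hx
    rw [hnorm x ((memLp_two_iff_integrable_sq_norm (hmeas x)).2 (hreal x hx).1), (hreal x hx).2,
      Real.sqrt_mul hc, Real.sqrt_sq (norm_nonneg _)]
  have hseq : ∀ x : F, ∃ v : ℕ → F,
      (∀ n, v n ∈ Submodule.span ℂ s) ∧ Tendsto v atTop (𝓝 x) := by
    intro x
    have hx : x ∈ closure (Submodule.span ℂ s : Set F) := by
      rw [← Submodule.topologicalClosure_coe, hs]; trivial
    exact mem_closure_iff_seq_limit.1 hx
  have hlim : ∀ {v : ℕ → F} {x : F}, Tendsto v atTop (𝓝 x) →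
      Tendsto (fun n => ENNReal.ofReal (Real.sqrt c * ‖v n‖)) atTop
        (𝓝 (ENNReal.ofReal (Real.sqrt c * ‖x‖))) := fun hv =>
    ENNReal.tendsto_ofReal (hv.norm.const_mul _)
  have hle : ∀ x, eLpNorm (fun u => ⟪ξ u, x⟫_ℂ) 2 m ≤ ENNReal.ofReal (Real.sqrt c * ‖x‖) := by
    intro x
    obtain ⟨v, hv, hvx⟩ := hseq x
    refine (Lp.eLpNorm_lim_le_liminf_eLpNorm (f := fun n u => ⟪ξ u, v n⟫_ℂ)
      (fun n => hmeas (v n)) _ (.of_forall fun u => tendsto_const_nhds.inner hvx)).trans_eq ?_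
    simp only [hspanNorm _ (hv _)]
    exact (hlim hvx).liminf_eq
  have hge : ENNReal.ofReal (Real.sqrt c * ‖x‖) ≤ eLpNorm (fun u => ⟪ξ u, x⟫_ℂ) 2 m := by
    obtain ⟨v, hv, hvx⟩ := hseq x
    have h₀ : Tendsto (fun n => v n - x) atTop (𝓝 0) := by
      simpa using hvx.sub_const x
    have h₁ := (hlim h₀).const_add (eLpNorm (fun u => ⟪ξ u, x⟫_ℂ) 2 m)
    simp only [norm_zero, mul_zero, ENNReal.ofReal_zero, add_zero] at h₁
    refine le_of_tendsto_of_tendsto' (hlim hvx) h₁ fun n => ?_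
    rw [← hspanNorm _ (hv n)]
    calc eLpNorm (fun u => ⟪ξ u, v n⟫_ℂ) 2 m
        = eLpNorm ((fun u => ⟪ξ u, x⟫_ℂ) + fun u => ⟪ξ u, v n - x⟫_ℂ) 2 m := by
          congr 1; ext u; simp
      _ ≤ _ := (eLpNorm_add_le (hmeas _) (hmeas _) (by norm_num)).trans (by gcongr; exact hle _)
  have hmem : MemLp (fun u => ⟪ξ u, x⟫_ℂ) 2 m :=
    ⟨hmeas x, (hle x).trans_lt ENNReal.ofReal_lt_top⟩
  refine ⟨(memLp_two_iff_integrable_sq_norm (hmeas x)).1 hmem, ?_⟩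
  have h := le_antisymm (hle x) hge
  rw [hnorm x hmem, ENNReal.ofReal_eq_ofReal_iff (by positivity) (by positivity)] at h
  rw [← Real.sq_sqrt (integral_nonneg fun u => by positivity :
    0 ≤ ∫ u, ‖⟪ξ u, x⟫_ℂ‖ ^ 2 ∂m), h, mul_pow, Real.sq_sqrt hc]

open MeasureTheory in
theorem Complex.integral_exp_mul_add_conj_mul_sub_normSq (a b : ℂ) :
    ∫ z : ℂ, Complex.exp (a * z + (starRingEnd ℂ) z * b - (Complex.normSq z : ℂ)) =
      Real.pi * Complex.exp (a * b) := by
  have h := GaussianFourier.integral_cexp_neg_mul_sum_add (b := 1) (by simp)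
    (![a + b, Complex.I * (a - b)] : Fin 2 → ℂ)
  rw [← Complex.volume_preserving_equiv_pi.integral_comp'] at h
  convert h using 1
  · congr 1 with z
    congr 1
    simp only [Complex.measurableEquivPi_apply, Fin.sum_univ_two, Matrix.cons_val_zero,
      Matrix.cons_val_one]
    have hz : (starRingEnd ℂ) z = z.re - z.im * Complex.I := by
      apply Complex.ext <;> simp
    have hz' : a * z = a * (z.re + z.im * Complex.I) := by rw [Complex.re_add_im]
    rw [hz, hz', Complex.normSq_apply]
    push_cast
    ring
  · simp only [Fin.sum_univ_two, Matrix.cons_val_zero, Matrix.cons_val_one, Fintype.card_fin]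
    congr 1
    · simp
    · congr 1
      rw [mul_pow, Complex.I_sq]
      ring

open MeasureTheory in
theorem Complex.integral_pi_exp_mul_add_conj_mul_sub_normSq {ι : Type*} [Fintype ι]
    (a b : ι → ℂ) :
    ∫ z : ι → ℂ, Complex.exp (∑ j, a j * z j + ∑ j, (starRingEnd ℂ) (z j) * b j
      - ∑ j, (Complex.normSq (z j) : ℂ)) =
      (Real.pi : ℂ) ^ Fintype.card ι * Complex.exp (∑ j, a j * b j) := by
  simp only [← Finset.sum_add_distrib, ← Finset.sum_sub_distrib, Complex.exp_sum]
  rw [integral_fintype_prod_volume_eq_prod (fun j z =>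
    Complex.exp (a j * z + (starRingEnd ℂ) z * b j - (Complex.normSq z : ℂ)))]
  simp [Complex.integral_exp_mul_add_conj_mul_sub_normSq, Finset.prod_mul_distrib]

theorem ConvexOn.exists_affine_le_of_pos {f : ℝ → ℝ} (hf : ConvexOn ℝ (Set.Ici 0) f) {x : ℝ}
    (hx : 0 < x) : ∃ k, ∀ y, 0 ≤ y → f x + k * (y - x) ≤ f y := by
  have hx' : x ∈ interior (Set.Ici (0 : ℝ)) := by simpa using hx
  refine ⟨derivWithin f (Set.Ioi x) x, fun y hy => ?_⟩
  rcases lt_trichotomy x y with h | rfl | h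
  · have := hf.rightDeriv_le_slope_of_mem_interior hx' hy h
    rw [slope_def_field, le_div_iff₀ (sub_pos.2 h)] at this
    linarith
  · simp
  · have := (hf.slope_le_leftDeriv_of_mem_interior hy hx' h).trans
      (hf.leftDeriv_le_rightDeriv_of_mem_interior hx')
    rw [slope_def_field, div_le_iff₀ (sub_pos.2 h)] at this
    linarith

open MeasureTheory in
/-- Jensen's inequality with a weight on `[0, ∞)`; no continuity at `0` is needed. -/
theorem ConvexOn.map_weighted_integral_le {α : Type*} [MeasurableSpace α] {m : Measure α}
    {f : ℝ → ℝ} (hf : ConvexOn ℝ (Set.Ici 0) f) {g p : α → ℝ} (hg : ∀ a, 0 ≤ g a)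
    (hp : ∀ a, 0 ≤ p a) (hpint : Integrable p m) (hp1 : ∫ a, p a ∂m = 1)
    (hgp : Integrable (fun a => g a * p a) m) (hfp : Integrable (fun a => f (g a) * p a) m) :
    f (∫ a, g a * p a ∂m) ≤ ∫ a, f (g a) * p a ∂m := by
  have hnonneg : ∀ a, 0 ≤ g a * p a := fun a => mul_nonneg (hg a) (hp a)
  have hx0 : 0 ≤ ∫ a, g a * p a ∂m := integral_nonneg fun a => hnonneg a
  rcases hx0.eq_or_lt with h₀ | hpos
  · have hae : (fun a => f (g a) * p a) =ᵐ[m] fun a => f 0 * p a := by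
      filter_upwards [(integral_eq_zero_iff_of_nonneg (fun a => hnonneg a) hgp).1 h₀.symm] with a ha
      rcases mul_eq_zero.1 ha with h | h <;> simp [h]
    rw [integral_congr_ae hae, integral_const_mul, hp1, mul_one]
    exact (congrArg f h₀.symm).le
  · obtain ⟨k, hk⟩ := hf.exists_affine_le_of_pos hpos
    set x := ∫ a, g a * p a ∂m with hx
    have hint : Integrable (fun a => (f x - k * x) * p a + k * (g a * p a)) m :=
      (hpint.const_mul _).add (hgp.const_mul _)
    calc f x = ∫ a, ((f x - k * x) * p a + k * (g a * p a)) ∂m := by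
          rw [integral_add (hpint.const_mul _) (hgp.const_mul _), integral_const_mul,
            integral_const_mul, hp1, ← hx]
          ring
      _ ≤ ∫ a, f (g a) * p a ∂m := by
          refine integral_mono hint hfp fun a => ?_
          have := mul_le_mul_of_nonneg_right (hk (g a) (hg a)) (hp a)
          dsimp only
          linarith

theorem Orthonormal.countable_of_separableSpace {ι F : Type*} [NormedAddCommGroup F]
    [InnerProductSpace ℂ F] [TopologicalSpace.SeparableSpace F] {e : ι → F}
    (he : Orthonormal ℂ e) : Countable ι := by
  refine Pairwise.countable_of_isOpen_disjoint (s := fun i => Metric.ball (e i) (1 / 2))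
    (fun i j hij => Metric.ball_disjoint_ball ?_) (fun i => Metric.isOpen_ball)
    fun i => ⟨e i, by simp⟩
  have h : ‖e i - e j‖ ^ 2 = 2 := by
    rw [@norm_sub_sq ℂ, he.2 hij, he.1, he.1]
    norm_num
  rw [dist_eq_norm]
  nlinarith [norm_nonneg (e i - e j)]

theorem separableSpace_of_total_range {X F : Type*} [TopologicalSpace X]
    [TopologicalSpace.SeparableSpace X] [NormedAddCommGroup F] [NormedSpace ℂ F] {ξ : X → F}
    (hξ : Continuous ξ) (htot : (Submodule.span ℂ (Set.range ξ)).topologicalClosure = ⊤) :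
    TopologicalSpace.SeparableSpace F := by
  have h := ((TopologicalSpace.isSeparable_range hξ).span (R := ℂ)).closure
  rw [← Submodule.topologicalClosure_coe, htot] at h
  exact TopologicalSpace.isSeparable_univ_iff.1 h

/-- The overlap formula that characterizes normalized coherent states. -/
def HasCoherentOverlap {F : Type*} [NormedAddCommGroup F] [InnerProductSpace ℂ F] {K : ℕ}
    (ξ : (Fin K → ℂ) → F) : Prop :=
  ∀ u v : Fin K → ℂ,
    ⟪ξ u, ξ v⟫_ℂ = Complex.exp
      ((∑ j, (starRingEnd ℂ) (u j) * v j)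
        - (∑ j, (Complex.normSq (u j) : ℂ)) / 2
        - (∑ j, (Complex.normSq (v j) : ℂ)) / 2)

namespace HasCoherentOverlap

open MeasureTheory

variable {F : Type*} [NormedAddCommGroup F] [InnerProductSpace ℂ F] {K : ℕ}
  {ξ : (Fin K → ℂ) → F}

theorem norm_eq_one (hξ : HasCoherentOverlap ξ) (u : Fin K → ℂ) : ‖ξ u‖ = 1 := by
  have h : ⟪ξ u, ξ u⟫_ℂ = 1 := by
    rw [hξ u u, Complex.exp_eq_one_iff]
    refine ⟨0, ?_⟩
    simp only [Complex.normSq_eq_conj_mul_self]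
    push_cast
    ring
  rw [Complex.inner_self_eq_ofReal_norm_sq] at h
  have h' : ‖ξ u‖ ^ 2 = 1 := by exact_mod_cast h
  exact (pow_eq_one_iff_of_nonneg (norm_nonneg _) two_ne_zero).1 h'

theorem continuous (hξ : HasCoherentOverlap ξ) : Continuous ξ := by
  refine continuous_iff_continuousAt.2 fun u => tendsto_iff_norm_sub_tendsto_zero.2 ?_
  have hsq : ∀ v, ‖ξ v - ξ u‖ = Real.sqrt (2 - 2 * (⟪ξ v, ξ u⟫_ℂ).re) := by
    intro v
    rw [← Real.sqrt_sq (norm_nonneg (ξ v - ξ u)), @norm_sub_sq ℂ, hξ.norm_eq_one,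
      hξ.norm_eq_one]
    congr 1
    simp only [RCLike.re_to_complex]
    ring
  have hcont : Continuous fun v => ‖ξ v - ξ u‖ := by
    simp only [hsq, hξ _ u]
    have := Complex.continuous_normSq
    fun_prop
  simpa using hcont.tendsto u

theorem integral_inner_mul_inner (hξ : HasCoherentOverlap ξ) (v w : Fin K → ℂ) :
    ∫ u, ⟪ξ v, ξ u⟫_ℂ * ⟪ξ u, ξ w⟫_ℂ = ((Real.pi ^ K : ℝ) : ℂ) * ⟪ξ v, ξ w⟫_ℂ := by
  have h := Complex.integral_pi_exp_mul_add_conj_mul_sub_normSq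
    (fun j => (starRingEnd ℂ) (v j)) w
  set c := Complex.exp (-(∑ j, (Complex.normSq (v j) : ℂ)) / 2
    - (∑ j, (Complex.normSq (w j) : ℂ)) / 2) with hc
  calc ∫ u, ⟪ξ v, ξ u⟫_ℂ * ⟪ξ u, ξ w⟫_ℂ
      = ∫ u : Fin K → ℂ, c * Complex.exp (∑ j, (starRingEnd ℂ) (v j) * u j
          + ∑ j, (starRingEnd ℂ) (u j) * w j - ∑ j, (Complex.normSq (u j) : ℂ)) := by
        congr 1 with u
        rw [hξ v u, hξ u w, hc, ← Complex.exp_add, ← Complex.exp_add]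
        congr 1
        ring
    _ = _ := by
        rw [integral_const_mul, h, hξ v w, mul_left_comm, hc, ← Complex.exp_add,
          Fintype.card_fin, Complex.ofReal_pow]
        congr 2
        ring

theorem integrable_inner_mul_inner (hξ : HasCoherentOverlap ξ) (v w : Fin K → ℂ) :
    Integrable fun u => ⟪ξ v, ξ u⟫_ℂ * ⟪ξ u, ξ w⟫_ℂ := by
  refine Integrable.of_integral_ne_zero ?_
  rw [hξ.integral_inner_mul_inner, hξ v w]
  exact mul_ne_zero (by exact_mod_cast (pow_pos Real.pi_pos K).ne') (Complex.exp_ne_zero _)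

/-- The resolution of the identity by a total family of coherent states. -/
theorem integral_norm_inner_sq (hξ : HasCoherentOverlap ξ)
    (htot : (Submodule.span ℂ (Set.range ξ)).topologicalClosure = ⊤) (x : F) :
    Integrable (fun u => ‖⟪ξ u, x⟫_ℂ‖ ^ 2) ∧
      ∫ u, ‖⟪ξ u, x⟫_ℂ‖ ^ 2 = Real.pi ^ K * ‖x‖ ^ 2 := by
  refine integral_norm_inner_sq_of_total (by positivity) htot
    (fun x => (hξ.continuous.inner continuous_const).aestronglyMeasurable) ?_ ?_ x
  · rintro _ ⟨v, rfl⟩ _ ⟨w, rfl⟩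
    exact hξ.integrable_inner_mul_inner v w
  · rintro _ ⟨v, rfl⟩ _ ⟨w, rfl⟩
    exact hξ.integral_inner_mul_inner v w

end HasCoherentOverlap

/-- Second Berezin–Lieb inequality: if the state `Γ` on the Fock space over a `K`-dimensional
space admits a nonnegative upper symbol `ν`, i.e. `Γ = ∫ ν(u)|ξ(u)⟩⟨ξ(u)| du` with `∫ ν = 1`,
where `ξ` are the normalized coherent states, and `Γ` is diagonalized in a Hilbert basis `e`
with eigenvalues `μ`, then for every convex `f : ℝ⁺ → ℝ`,
`Tr[f(Γ)] = Σ_i f(μ_i) ≤ π^{-K} ∫ f(π^K ν(u)) du`. -/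
theorem berezin_lieb_upper {F : Type*} [NormedAddCommGroup F] [InnerProductSpace ℂ F]
    [CompleteSpace F] (K : ℕ) (ξ : (Fin K → ℂ) → F)
    (hξ : ∀ u v : Fin K → ℂ,
      ⟪ξ u, ξ v⟫_ℂ = Complex.exp
        ((∑ j, (starRingEnd ℂ) (u j) * v j)
          - (∑ j, (Complex.normSq (u j) : ℂ)) / 2
          - (∑ j, (Complex.normSq (v j) : ℂ)) / 2))
    (htot : (Submodule.span ℂ (Set.range ξ)).topologicalClosure = ⊤)
    (ν : (Fin K → ℂ) → ℝ) (hν0 : ∀ u, 0 ≤ ν u) (hν1 : ∫ u : Fin K → ℂ, ν u = 1)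
    (Γ : F →L[ℂ] F)
    (hΓ : ∀ x y : F, ⟪x, Γ y⟫_ℂ =
      ∫ u : Fin K → ℂ, (ν u : ℂ) * ⟪x, ξ u⟫_ℂ * ⟪ξ u, y⟫_ℂ)
    {ι : Type*} (e : HilbertBasis ι ℂ F) (μ : ι → ℝ)
    (hμ : ∀ i, Γ (e i) = (μ i : ℂ) • e i)
    (f : ℝ → ℝ) (hf : ConvexOn ℝ (Set.Ici 0) f)
    (hsum : Summable fun i => f (μ i))
    (hint : MeasureTheory.Integrable fun u : Fin K → ℂ => f (Real.pi ^ K * ν u)) :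
    ∑' i, f (μ i) ≤ (Real.pi ^ K)⁻¹ * ∫ u : Fin K → ℂ, f (Real.pi ^ K * ν u) := by
  have hcoh : HasCoherentOverlap ξ := hξ
  have hcont := hcoh.continuous
  have := separableSpace_of_total_range hcont htot
  have : Countable ι := e.orthonormal.countable_of_separableSpace
  set c : ℝ := Real.pi ^ K with hc
  have hc0 : 0 < c := by positivity
  have hν : MeasureTheory.Integrable ν :=
    MeasureTheory.Integrable.of_integral_ne_zero (by rw [hν1]; exact one_ne_zero)
  set p : ι → (Fin K → ℂ) → ℝ := fun i u => ‖⟪ξ u, e i⟫_ℂ‖ ^ 2 with hp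
  have hp0 : ∀ i u, 0 ≤ p i u := fun i u => by positivity
  have hp1 : ∀ i u, p i u ≤ 1 := by
    intro i u
    have h := norm_inner_le_norm (𝕜 := ℂ) (ξ u) (e i)
    rw [hcoh.norm_eq_one, e.orthonormal.1, mul_one] at h
    exact pow_le_one₀ (norm_nonneg _) h
  have hpcont : ∀ i, Continuous (p i) := fun i =>
    (hcont.inner continuous_const).norm.pow 2
  have hpint : ∀ i, MeasureTheory.Integrable (p i) ∧ ∫ u, p i u = c := by
    intro i
    have h := hcoh.integral_norm_inner_sq htot (e i)
    rwa [e.orthonormal.1, one_pow, mul_one] at h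
  have hpsum : ∀ u, HasSum (fun i => p i u) 1 := by
    intro u
    have h := e.hasSum_inner_mul_inner (ξ u) (ξ u)
    rw [Complex.inner_self_eq_ofReal_norm_sq, hcoh.norm_eq_one, one_pow] at h
    have hterm : ∀ i, ⟪ξ u, e i⟫_ℂ * ⟪e i, ξ u⟫_ℂ = ((p i u : ℝ) : ℂ) := by
      intro i
      rw [← inner_conj_symm (e i) (ξ u), Complex.mul_conj', hp, Complex.ofReal_pow]
    simp only [hterm] at h
    exact_mod_cast h
  have hmul : ∀ {g : (Fin K → ℂ) → ℝ}, MeasureTheory.Integrable g → ∀ i,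
      MeasureTheory.Integrable fun u => g u * p i u := fun hg i =>
    hg.mul_bdd (c := 1) (hpcont i).aestronglyMeasurable
      (.of_forall fun u => by rw [Real.norm_of_nonneg (hp0 i u)]; exact hp1 i u)
  have hμint : ∀ i, μ i = ∫ u, ν u * p i u := by
    intro i
    have h := hΓ (e i) (e i)
    rw [hμ, inner_smul_right, Complex.inner_self_eq_ofReal_norm_sq, e.orthonormal.1] at h
    have hterm : ∀ u, (ν u : ℂ) * ⟪e i, ξ u⟫_ℂ * ⟪ξ u, e i⟫_ℂ = ((ν u * p i u : ℝ) : ℂ) := by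
      intro u
      rw [mul_assoc, ← inner_conj_symm (e i) (ξ u), Complex.conj_mul', hp, Complex.ofReal_mul,
        Complex.ofReal_pow]
    simp only [hterm, integral_complex_ofReal, one_pow, Complex.ofReal_one, mul_one] at h
    exact_mod_cast h
  have hjensen : ∀ i, f (μ i) ≤ c⁻¹ * ∫ u, f (c * ν u) * p i u := by
    intro i
    have hscale : ∀ (g : (Fin K → ℂ) → ℝ) (u : Fin K → ℂ),
        g u * (c⁻¹ * p i u) = c⁻¹ * (g u * p i u) := fun g u => by ring
    have h := hf.map_weighted_integral_le (m := MeasureTheory.volume)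
      (g := fun u => c * ν u) (p := fun u => c⁻¹ * p i u)
      (fun u => mul_nonneg hc0.le (hν0 u)) (fun u => mul_nonneg (inv_nonneg.2 hc0.le) (hp0 i u))
      ((hpint i).1.const_mul _)
      (by rw [MeasureTheory.integral_const_mul, (hpint i).2, inv_mul_cancel₀ hc0.ne'])
      (by
        simp only [hscale fun u => c * ν u]
        exact (hmul (hν.const_mul c) i).const_mul _)
      (by
        simp only [hscale fun u => f (c * ν u)]
        exact (hmul hint i).const_mul _)
    simp only [hscale fun u => f (c * ν u), MeasureTheory.integral_const_mul] at h
    convert h using 2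
    rw [hμint i]
    congr 1 with u
    field_simp
  have hswap : HasSum (fun i => ∫ u, f (c * ν u) * p i u) (∫ u, f (c * ν u)) := by
    refine MeasureTheory.hasSum_integral_of_dominated_convergence
      (fun i u => ‖f (c * ν u)‖ * p i u) (fun i => (hmul hint i).aestronglyMeasurable)
      (fun i => .of_forall fun u => ?_) (.of_forall fun u => (hpsum u).summable.mul_left _) ?_
      (.of_forall fun u => by simpa using (hpsum u).mul_left (f (c * ν u)))
    · rw [norm_mul, Real.norm_of_nonneg (hp0 i u)]
    · simp only [tsum_mul_left, (hpsum _).tsum_eq, mul_one]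
      exact hint.norm
  exact hasSum_le hjensen hsum.hasSum (hswap.mul_left c⁻¹)
end
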